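/- Let F be an infinite field with char(F) ≠ 2 and let d = 1. Then the maximal degree D_max of elements of a minimal homogeneous system of generators of the algebra of O(3)-invariants of a single generic 3×3 matrix equals 6. -/

import Mathlib

open Matrix MvPolynomial

/-- The polynomial ring `R = F[x_{ij}(k)]`, `1 ≤ i,j ≤ 3`, `1 ≤ k ≤ d`. -/
abbrev Rpoly (F : Type) [Field F] (d : ℕ) := MvPolynomial (Fin 3 × Fin 3 × Fin d) F

variable (F : Type) [Field F] (d : ℕ)

/-- The `k`-th generic 3×3 matrix `X_k`. -/
noncomputable def genMat (k : Fin d) : Matrix (Fin 3) (Fin 3) (Rpoly F d) :=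
  Matrix.of fun i j => MvPolynomial.X (i, j, k)

/-- The action of `g` on `R` by simultaneous conjugation: entries of `X_k` are replaced
by the entries of `gᵀ X_k g`. -/
noncomputable def actHom (g : Matrix (Fin 3) (Fin 3) F) : Rpoly F d →ₐ[F] Rpoly F d :=
  MvPolynomial.aeval fun p : Fin 3 × Fin 3 × Fin d =>
    ((g.map (algebraMap F (Rpoly F d)))ᵀ * genMat F d p.2.2 *
      g.map (algebraMap F (Rpoly F d))) p.1 p.2.1

/-- The algebra `R^{O(3)}` of invariants of the orthogonal group. -/
noncomputable def invAlg : Subalgebra F (Rpoly F d) where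
  carrier := {f | ∀ g : Matrix (Fin 3) (Fin 3) F, gᵀ * g = 1 → actHom F d g f = f}
  mul_mem' := by
    intro a b ha hb g hg
    rw [_root_.map_mul, ha g hg, hb g hg]
  add_mem' := by
    intro a b ha hb g hg
    rw [_root_.map_add, ha g hg, hb g hg]
  one_mem' := by
    intro g hg
    exact map_one _
  algebraMap_mem' := by
    intro r g hg
    exact (actHom F d g).commutes r

/-- The ideal of `R^{O(3)}` generated by all homogeneous invariants of positive degree. -/
noncomputable def plusIdeal : Ideal (invAlg F d) :=
  Ideal.span {f | ∃ n : ℕ, 0 < n ∧ MvPolynomial.IsHomogeneous (f : Rpoly F d) n}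

/-- The set of decomposable invariants: elements of `R^{O(3)}` lying in the square of the
ideal generated by all homogeneous invariants of positive degree. -/
noncomputable def decompSet : Set (Rpoly F d) :=
  Subtype.val '' ((plusIdeal F d ^ 2 : Ideal (invAlg F d)) : Set (invAlg F d))

/-!
The invariants of a matrix `M` under orthogonal conjugation are those of the pair `(S, v)`, where
`S = M + Mᵀ` and `v` is the axial vector of `M`: the coefficients `b₀, b₁, b₂` of the characteristic
polynomial of `S`, the moments `v ⬝ v`, `v ⬝ S v`, `v ⬝ S² v`, called `b₃, b₄, b₅`, and
`b₆ = det (v, S v, S² v)`, of degrees 1, 2, 3, 2, 3, 4 and 6.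

These seven generate. Over an algebraically closed field two reflections carry a matrix with
`b₃ (b₃ b₅ - b₄²) ≠ 0` into a six-dimensional slice, and an invariant restricts to the slice as a
polynomial fixed by two diagonal sign changes; every such polynomial is a fraction of the
restricted `bᵢ` with a power of `b₃ (b₃ b₅ - b₄²)` as denominator. As `b₆²` is a polynomial in
`b₀, …, b₅`, every invariant becomes `P + b₆ Q` with `P, Q ∈ F[b₀, …, b₅]` after multiplication by
such a denominator. The prime factors `b₃` and `b₃ b₅ - b₄²` can be cancelled: over the algebraic
closure every point at which the discriminant of the characteristic polynomial is nonzero is a value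
of `(b₀, …, b₅)`, so the Nullstellensatz shows that the prime divides `P` and `Q`.

Hence every homogeneous invariant of degree greater than 6 is decomposable. On the other hand,
transposition fixes `b₀, …, b₅` and negates `b₆`, so it changes a decomposable invariant by `b₆`
times a polynomial without constant term, whereas it changes `b₆` by `-2 b₆`.
-/

section Orthogonal

variable {n R : Type*} [Fintype n] [DecidableEq n] [CommRing R] {g : Matrix n n R}

theorem det_mul_det_of_orthogonal (hg : gᵀ * g = 1) : g.det * g.det = 1 := by
  simpa only [det_mul, det_transpose, det_one] using congrArg det hg

theorem adjugate_of_orthogonal (hg : gᵀ * g = 1) : g.adjugate = g.det • gᵀ := by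
  calc g.adjugate = gᵀ * g * g.adjugate := by rw [hg, one_mul]
    _ = g.det • gᵀ := by rw [Matrix.mul_assoc, mul_adjugate, Matrix.mul_smul, Matrix.mul_one]

theorem conj_pow_of_orthogonal (hg : gᵀ * g = 1) (S : Matrix n n R) (k : ℕ) :
    (gᵀ * S * g) ^ k = gᵀ * S ^ k * g := by
  have hg' : g * gᵀ = 1 := mul_eq_one_comm.mp hg
  induction k with
  | zero => simp only [pow_zero, Matrix.mul_one, hg]
  | succ k ih =>
    calc (gᵀ * S * g) ^ (k + 1) = gᵀ * S ^ k * (g * gᵀ) * S * g := by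
          rw [pow_succ, ih]; simp only [Matrix.mul_assoc]
      _ = gᵀ * S ^ (k + 1) * g := by rw [hg', Matrix.mul_one, pow_succ, Matrix.mul_assoc gᵀ]

end Orthogonal

section Krylov

variable {n : ℕ} {R : Type*} [CommRing R]

/-- The moments `v ⬝ Sᵏ v` of a vector with respect to a square matrix. -/
def moment {m : Type*} [Fintype m] [DecidableEq m] (S : Matrix m m R) (v : m → R) (k : ℕ) : R :=
  v ⬝ᵥ (S ^ k *ᵥ v)

/-- The Krylov matrix of `(S, v)`, whose rows are `v, S v, S² v, …`. -/
def krylov (S : Matrix (Fin n) (Fin n) R) (v : Fin n → R) : Matrix (Fin n) (Fin n) R :=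
  of fun i => S ^ (i : ℕ) *ᵥ v

theorem krylov_mul_transpose {S : Matrix (Fin n) (Fin n) R} (hS : Sᵀ = S) (v : Fin n → R) :
    krylov S v * (krylov S v)ᵀ = of fun i j : Fin n => moment S v (i + j) := by
  ext i j
  change (S ^ (i : ℕ) *ᵥ v) ⬝ᵥ (S ^ (j : ℕ) *ᵥ v) = v ⬝ᵥ (S ^ (i + j : ℕ) *ᵥ v)
  rw [pow_add, ← mulVec_mulVec, dotProduct_mulVec v, ← mulVec_transpose, transpose_pow, hS]

variable {g : Matrix (Fin n) (Fin n) R}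

theorem moment_conj_smul {c : R} (hc : c * c = 1) (hg : gᵀ * g = 1)
    (S : Matrix (Fin n) (Fin n) R) (v : Fin n → R) (k : ℕ) :
    moment (gᵀ * S * g) (c • (gᵀ *ᵥ v)) k = moment S v k := by
  have hg' : g * gᵀ = 1 := mul_eq_one_comm.mp hg
  calc moment (gᵀ * S * g) (c • (gᵀ *ᵥ v)) k
      = c * c * (v ⬝ᵥ ((g * gᵀ) * S ^ k * (g * gᵀ)) *ᵥ v) := by
        simp only [moment, conj_pow_of_orthogonal hg, mulVec_smul, smul_dotProduct,
          dotProduct_smul, mulVec_transpose g v, ← dotProduct_mulVec, smul_eq_mul]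
        simp only [← mulVec_transpose, mulVec_mulVec, mul_assoc]
    _ = moment S v k := by rw [hc, hg', Matrix.one_mul, Matrix.mul_one, one_mul, moment]

theorem krylov_conj_smul (c : R) (hg : gᵀ * g = 1)
    (S : Matrix (Fin n) (Fin n) R) (v : Fin n → R) :
    krylov (gᵀ * S * g) (c • (gᵀ *ᵥ v)) = c • (krylov S v * g) := by
  have hg' : g * gᵀ = 1 := mul_eq_one_comm.mp hg
  ext i j
  change ((gᵀ * S * g) ^ (i : ℕ) *ᵥ c • (gᵀ *ᵥ v)) j = c • ((S ^ (i : ℕ) *ᵥ v) ᵥ* g) j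
  rw [conj_pow_of_orthogonal hg, mulVec_smul, mulVec_mulVec, Matrix.mul_assoc, hg',
    Matrix.mul_one, ← mulVec_mulVec, mulVec_transpose, Pi.smul_apply]

end Krylov

section PairInvariants

variable {R : Type*} [CommRing R]

theorem pow_three_fin_three (S : Matrix (Fin 3) (Fin 3) R) :
    S ^ 3 = S.trace • S ^ 2 - S.adjugate.trace • S + S.det • 1 := by
  ext i j
  fin_cases i <;> fin_cases j <;>
    simp [pow_succ, Matrix.mul_apply, Fin.sum_univ_three, adjugate_fin_three, trace_fin_three,
      det_fin_three] <;> ring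

theorem moment_add_three (S : Matrix (Fin 3) (Fin 3) R) (v : Fin 3 → R) (k : ℕ) :
    moment S v (k + 3) = S.trace * moment S v (k + 2) - S.adjugate.trace * moment S v (k + 1) +
      S.det * moment S v k := by
  simp only [moment, pow_add S k, pow_three_fin_three, Matrix.mul_add, Matrix.mul_sub,
    Matrix.mul_smul, Matrix.mul_one, add_mulVec, sub_mulVec, smul_mulVec, dotProduct_add,
    dotProduct_sub, dotProduct_smul, smul_eq_mul, pow_one]

/-- Seven functions of a 3×3 matrix `S` and a vector `v` that are unchanged when `g` orthogonal
takes `(S, v)` to `(gᵀ S g, ± gᵀ v)`, where the sign is `det g`. -/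
def pairInvariants (S : Matrix (Fin 3) (Fin 3) R) (v : Fin 3 → R) : Fin 7 → R :=
  ![S.trace, S.adjugate.trace, S.det, moment S v 0, moment S v 1, moment S v 2, (krylov S v).det]

theorem pairInvariants_conj {g : Matrix (Fin 3) (Fin 3) R} (hg : gᵀ * g = 1)
    (S : Matrix (Fin 3) (Fin 3) R) (v : Fin 3 → R) :
    pairInvariants (gᵀ * S * g) (g.det • (gᵀ *ᵥ v)) = pairInvariants S v := by
  have hg' : g * gᵀ = 1 := mul_eq_one_comm.mp hg
  have hdet : g.det * g.det = 1 := det_mul_det_of_orthogonal hg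
  have htrace : (gᵀ * S * g).trace = S.trace := by
    rw [trace_mul_comm, ← Matrix.mul_assoc, hg', Matrix.one_mul]
  have hadj : (gᵀ * S * g).adjugate.trace = S.adjugate.trace := by
    rw [adjugate_mul_distrib, adjugate_mul_distrib, ← Matrix.mul_assoc, trace_mul_comm,
      ← Matrix.mul_assoc, ← adjugate_mul_distrib, hg', adjugate_one, Matrix.one_mul]
  have hS : (gᵀ * S * g).det = S.det := by
    rw [det_mul, det_mul, det_transpose, mul_right_comm, hdet, one_mul]
  have hk : (g.det • (krylov S v * g)).det = (krylov S v).det := by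
    rw [det_smul, det_mul, Fintype.card_fin]
    linear_combination (krylov S v).det * (g.det * g.det + 1) * hdet
  simp only [pairInvariants, htrace, hadj, hS, moment_conj_smul hdet hg, krylov_conj_smul _ hg, hk]

/-- The Gram determinant of `v, S v, S² v` in terms of the first six pair invariants; the moments
of order 3 and 4 are eliminated by the Cayley–Hamilton theorem. -/
def gramDet (y : Fin 6 → R) : R :=
  let m₃ := y 0 * y 5 - y 1 * y 4 + y 2 * y 3
  let m₄ := y 0 * m₃ - y 1 * y 5 + y 2 * y 4
  det !![y 3, y 4, y 5; y 4, y 5, m₃; y 5, m₃, m₄]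

theorem pairInvariants_last_sq {S : Matrix (Fin 3) (Fin 3) R} (hS : Sᵀ = S) (v : Fin 3 → R) :
    pairInvariants S v 6 ^ 2 = gramDet fun i => pairInvariants S v i.castSucc := by
  have h₃ := moment_add_three S v 0
  have h₄ := moment_add_three S v 1
  calc pairInvariants S v 6 ^ 2 = (krylov S v * (krylov S v)ᵀ).det := by
        rw [det_mul, det_transpose, ← sq]; rfl
    _ = (of fun i j : Fin 3 => moment S v (i + j)).det := by rw [krylov_mul_transpose hS]
    _ = gramDet fun i => pairInvariants S v i.castSucc := by
        refine congrArg det ?_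
        ext i j
        fin_cases i <;> fin_cases j <;> simp [pairInvariants, h₃, h₄]

end PairInvariants

section MatrixInvariants

variable {R A : Type*} [CommRing R] [CommRing A]

theorem map_pow_mulVec {n : Type*} [Fintype n] [DecidableEq n] (φ : R →+* A) (S : Matrix n n R)
    (v : n → R) (k : ℕ) : φ ∘ (S ^ k *ᵥ v) = (S.map φ) ^ k *ᵥ (φ ∘ v) := by
  ext i
  rw [Function.comp_apply, φ.map_mulVec, ← φ.mapMatrix_apply, map_pow, φ.mapMatrix_apply]

theorem map_pairInvariants (φ : R →+* A) (S : Matrix (Fin 3) (Fin 3) R) (v : Fin 3 → R)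
    (i : Fin 7) : φ (pairInvariants S v i) = pairInvariants (S.map φ) (φ ∘ v) i := by
  have htrace (T : Matrix (Fin 3) (Fin 3) R) : φ T.trace = (T.map φ).trace :=
    AddMonoidHom.map_trace φ.toAddMonoidHom T
  have hmoment (k : ℕ) : φ (moment S v k) = moment (S.map φ) (φ ∘ v) k := by
    rw [moment, φ.map_dotProduct, map_pow_mulVec, moment]
  have hkrylov : (krylov S v).map φ = krylov (S.map φ) (φ ∘ v) :=
    Matrix.ext fun i j => congrFun (map_pow_mulVec φ S v i) j
  fin_cases i
  · exact htrace S
  · exact (htrace _).trans (congrArg trace (φ.map_adjugate S))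
  · exact φ.map_det S
  · exact hmoment 0
  · exact hmoment 1
  · exact hmoment 2
  · exact (φ.map_det _).trans (congrArg det hkrylov)

/-- The axial vector of a 3×3 matrix, encoding its skew-symmetric part. -/
def axialVector (M : Matrix (Fin 3) (Fin 3) R) : Fin 3 → R :=
  ![M 2 1 - M 1 2, M 0 2 - M 2 0, M 1 0 - M 0 1]

theorem axialVector_transpose (M : Matrix (Fin 3) (Fin 3) R) :
    axialVector Mᵀ = -axialVector M := by
  ext i
  fin_cases i <;> simp [axialVector]

theorem axialVector_conj (g M : Matrix (Fin 3) (Fin 3) R) :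
    axialVector (gᵀ * M * g) = g.adjugate *ᵥ axialVector M := by
  ext i
  fin_cases i <;>
    simp [axialVector, adjugate_fin_three, mulVec, dotProduct, Matrix.mul_apply,
      Fin.sum_univ_three] <;> ring

/-- The seven basic invariants of a 3×3 matrix `M` under orthogonal conjugation: the pair
invariants of its symmetric part (times 2) and its axial vector. -/
def invariants (M : Matrix (Fin 3) (Fin 3) R) : Fin 7 → R :=
  pairInvariants (M + Mᵀ) (axialVector M)

theorem invariants_conj {g : Matrix (Fin 3) (Fin 3) R} (hg : gᵀ * g = 1)
    (M : Matrix (Fin 3) (Fin 3) R) : invariants (gᵀ * M * g) = invariants M := by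
  have hS : gᵀ * M * g + (gᵀ * M * g)ᵀ = gᵀ * (M + Mᵀ) * g := by
    simp only [transpose_mul, transpose_transpose, Matrix.mul_add, Matrix.add_mul,
      Matrix.mul_assoc]
  rw [invariants, hS, axialVector_conj, adjugate_of_orthogonal hg, smul_mulVec,
    pairInvariants_conj hg, invariants]

theorem invariants_transpose_castSucc (M : Matrix (Fin 3) (Fin 3) R) (i : Fin 6) :
    invariants Mᵀ i.castSucc = invariants M i.castSucc := by
  have hm (S : Matrix (Fin 3) (Fin 3) R) (v : Fin 3 → R) (k : ℕ) :
      moment S (-v) k = moment S v k := by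
    simp only [moment, mulVec_neg, dotProduct_neg, neg_dotProduct, neg_neg]
  rw [invariants, axialVector_transpose, transpose_transpose, add_comm]
  fin_cases i <;> simp [invariants, pairInvariants, hm]

theorem invariants_transpose_last (M : Matrix (Fin 3) (Fin 3) R) :
    invariants Mᵀ 6 = -invariants M 6 := by
  have hk (S : Matrix (Fin 3) (Fin 3) R) (v : Fin 3 → R) : krylov S (-v) = -krylov S v := by
    ext i j
    simp only [krylov, mulVec_neg, of_apply, Pi.neg_apply, Matrix.neg_apply]
  rw [invariants, axialVector_transpose, transpose_transpose, add_comm]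
  change (krylov _ _).det = -(krylov _ _).det
  rw [hk, det_neg, Fintype.card_fin, Odd.neg_one_pow (by decide), neg_one_mul]

theorem invariants_last_sq (M : Matrix (Fin 3) (Fin 3) R) :
    invariants M 6 ^ 2 = gramDet fun i => invariants M i.castSucc :=
  pairInvariants_last_sq (by rw [transpose_add, transpose_transpose, add_comm]) _

theorem map_invariants (φ : R →+* A) (M : Matrix (Fin 3) (Fin 3) R) (i : Fin 7) :
    φ (invariants M i) = invariants (M.map φ) i := by
  have hS : M.map φ + (M.map φ)ᵀ = (M + Mᵀ).map φ := by
    ext i j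
    simp only [Matrix.add_apply, map_apply, transpose_apply, map_add]
  have hv : axialVector (M.map φ) = φ ∘ axialVector M := by
    ext i
    fin_cases i <;> simp [axialVector]
  rw [invariants, invariants, hS, hv, map_pairInvariants]

theorem map_gramDet (φ : R →+* A) (y : Fin 6 → R) : φ (gramDet y) = gramDet (φ ∘ y) := by
  simp [gramDet, det_fin_three]

end MatrixInvariants

section Homogeneity

variable {σ R n : Type*} [CommRing R] [Fintype n]

theorem isHomogeneous_dotProduct {a b : ℕ} {v w : n → MvPolynomial σ R}
    (hv : ∀ i, (v i).IsHomogeneous a) (hw : ∀ i, (w i).IsHomogeneous b) :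
    (v ⬝ᵥ w).IsHomogeneous (a + b) :=
  IsHomogeneous.sum _ _ _ fun i _ => (hv i).mul (hw i)

variable [DecidableEq n]

theorem isHomogeneous_det {A : Matrix n n (MvPolynomial σ R)} {d : n → ℕ}
    (hA : ∀ i j, (A i j).IsHomogeneous (d i)) : A.det.IsHomogeneous (∑ i, d i) := by
  rw [← det_transpose, det_apply]
  refine IsHomogeneous.sum _ _ _ fun p _ => ?_
  have hp : ∏ i, Aᵀ (p i) i ∈ homogeneousSubmodule σ R (∑ i, d i) :=
    IsHomogeneous.prod _ _ _ fun i _ => hA i (p i)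
  exact zsmul_mem hp (Equiv.Perm.sign p : ℤ)

theorem isHomogeneous_pow_mulVec {S : Matrix n n (MvPolynomial σ R)}
    {v : n → MvPolynomial σ R} (hS : ∀ i j, (S i j).IsHomogeneous 1)
    (hv : ∀ i, (v i).IsHomogeneous 1) (k : ℕ) (i : n) : ((S ^ k *ᵥ v) i).IsHomogeneous (k + 1) := by
  induction k generalizing i with
  | zero => simpa only [pow_zero, one_mulVec] using hv i
  | succ k ih =>
    rw [pow_succ', ← mulVec_mulVec, add_comm]
    exact isHomogeneous_dotProduct (hS i) ih

theorem isHomogeneous_trace_adjugate {S : Matrix (Fin 3) (Fin 3) (MvPolynomial σ R)}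
    (hS : ∀ i j, (S i j).IsHomogeneous 1) : S.adjugate.trace.IsHomogeneous 2 := by
  have h (i j k l m n p q : Fin 3) : (S i j * S k l - S m n * S p q).IsHomogeneous 2 :=
    ((hS i j).mul (hS k l)).sub ((hS m n).mul (hS p q))
  rw [adjugate_fin_three, trace_fin_three_of]
  exact ((h _ _ _ _ _ _ _ _).add (h _ _ _ _ _ _ _ _)).add (h _ _ _ _ _ _ _ _)

/-- The degrees of the seven basic invariants. -/
def invDegree : Fin 7 → ℕ := ![1, 2, 3, 2, 3, 4, 6]

theorem isHomogeneous_pairInvariants {S : Matrix (Fin 3) (Fin 3) (MvPolynomial σ R)}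
    {v : Fin 3 → MvPolynomial σ R} (hS : ∀ i j, (S i j).IsHomogeneous 1)
    (hv : ∀ i, (v i).IsHomogeneous 1) (i : Fin 7) :
    (pairInvariants S v i).IsHomogeneous (invDegree i) := by
  have hmoment (k : ℕ) : (moment S v k).IsHomogeneous (1 + (k + 1)) :=
    isHomogeneous_dotProduct hv (isHomogeneous_pow_mulVec hS hv k)
  fin_cases i
  · exact IsHomogeneous.sum Finset.univ _ _ fun i _ => hS i i
  · exact isHomogeneous_trace_adjugate hS
  · exact isHomogeneous_det (d := fun _ => 1) hS
  · exact hmoment 0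
  · exact hmoment 1
  · exact hmoment 2
  · exact isHomogeneous_det (d := fun i : Fin 3 => (i : ℕ) + 1)
      fun i => isHomogeneous_pow_mulVec hS hv i

end Homogeneity

section BasicInvariants

variable {F : Type} [Field F] {A B : Type*} [CommRing A] [Algebra F A] [CommRing B] [Algebra F B]

/-- Evaluation of a polynomial in the entries of one generic 3×3 matrix at a matrix `M`. -/
noncomputable def evalAt (M : Matrix (Fin 3) (Fin 3) A) : Rpoly F 1 →ₐ[F] A :=
  aeval fun p => M p.1 p.2.1

theorem evalAt_X (M : Matrix (Fin 3) (Fin 3) A) (i j : Fin 3) :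
    evalAt M (X (i, j, 0) : Rpoly F 1) = M i j :=
  aeval_X _ _

theorem genMat_map_evalAt (M : Matrix (Fin 3) (Fin 3) A) :
    (genMat F 1 0).map (evalAt M) = M :=
  Matrix.ext fun i j => evalAt_X M i j

theorem map_evalAt (φ : A →ₐ[F] B) (M : Matrix (Fin 3) (Fin 3) A) (f : Rpoly F 1) :
    φ (evalAt M f) = evalAt (M.map φ) f := by
  rw [evalAt, ← AlgHom.comp_apply, comp_aeval]
  rfl

theorem actHom_eq_evalAt (g : Matrix (Fin 3) (Fin 3) F) (f : Rpoly F 1) :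
    actHom F 1 g f = evalAt ((g.map (algebraMap F (Rpoly F 1)))ᵀ * genMat F 1 0 *
      g.map (algebraMap F (Rpoly F 1))) f := by
  refine DFunLike.congr_fun (algHom_ext (f := actHom F 1 g) (g := evalAt _) fun p => ?_) f
  rw [actHom, evalAt, aeval_X, aeval_X, Subsingleton.elim p.2.2 0]

theorem evalAt_conj_of_mem_invAlg {f : Rpoly F 1} (hf : f ∈ invAlg F 1)
    {g : Matrix (Fin 3) (Fin 3) F} (hg : gᵀ * g = 1) (M : Matrix (Fin 3) (Fin 3) A) :
    evalAt ((g.map (algebraMap F A))ᵀ * M * g.map (algebraMap F A)) f = evalAt M f := by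
  conv_rhs => rw [← hf g hg, actHom_eq_evalAt, map_evalAt]
  congr 1
  have h : (g.map (algebraMap F (Rpoly F 1))).map (evalAt M) = g.map (algebraMap F A) :=
    Matrix.ext fun i j => (evalAt M).commutes (g i j)
  have h' := genMat_map_evalAt (F := F) M
  simp only [Matrix.map_mul, transpose_map, h, h']

variable (F) in
/-- The basic invariants of the generic 3×3 matrix. -/
noncomputable def basicInvariant (i : Fin 7) : Rpoly F 1 := invariants (genMat F 1 0) i

theorem evalAt_basicInvariant (M : Matrix (Fin 3) (Fin 3) A) (i : Fin 7) :
    evalAt M (basicInvariant F i) = invariants M i := by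
  have h := map_invariants (evalAt M : Rpoly F 1 →ₐ[F] A).toRingHom (genMat F 1 0) i
  exact h.trans (congrArg (invariants · i) (genMat_map_evalAt M))

theorem basicInvariant_mem_invAlg (i : Fin 7) : basicInvariant F i ∈ invAlg F 1 := by
  intro g hg
  have hg' : (g.map (algebraMap F (Rpoly F 1)))ᵀ * g.map (algebraMap F (Rpoly F 1)) = 1 := by
    rw [← transpose_map, ← Matrix.map_mul, hg, Matrix.map_one _ (map_zero _) (map_one _)]
  rw [actHom_eq_evalAt, evalAt_basicInvariant, invariants_conj hg', basicInvariant]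

theorem isHomogeneous_basicInvariant (i : Fin 7) :
    (basicInvariant F i).IsHomogeneous (invDegree i) := by
  have hX (i j : Fin 3) : (genMat F 1 0 i j).IsHomogeneous 1 := isHomogeneous_X _ _
  refine isHomogeneous_pairInvariants (fun i j => (hX i j).add (hX j i)) (fun i => ?_) i
  fin_cases i <;> exact (hX _ _).sub (hX _ _)

end BasicInvariants

theorem eq_zero_of_aeval_eq_zero_of_ne {σ R K : Type*} [CommRing R] [IsDomain R] [CommRing K]
    [IsDomain K] [Infinite K] [Algebra R K] [FaithfulSMul R K] {p q : MvPolynomial σ R}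
    (hq : q ≠ 0) (h : ∀ x : σ → K, aeval x q ≠ 0 → aeval x p = 0) : p = 0 := by
  have hpq : map (algebraMap R K) (p * q) = 0 := by
    refine MvPolynomial.funext fun x => ?_
    rw [eval_map, ← aeval_def, _root_.map_mul, _root_.map_zero, mul_eq_zero,
      or_iff_not_imp_right]
    exact h x
  have hinj := map_injective (σ := σ) _ (FaithfulSMul.algebraMap_injective R K)
  exact (mul_eq_zero.mp (hinj (hpq.trans (_root_.map_zero _).symm))).resolve_right hq

section Householder

variable {n R A : Type*} [DecidableEq n] [CommRing R] [CommRing A]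

/-- The matrix `1 - c w wᵀ`; it is the reflection in the hyperplane orthogonal to `w` when
`c * (w ⬝ᵥ w) = 2`, a division-free form of the usual normalisation. -/
def householder (c : R) (w : n → R) : Matrix n n R := 1 - c • vecMulVec w w

theorem householder_transpose (c : R) (w : n → R) : (householder c w)ᵀ = householder c w := by
  rw [householder, transpose_sub, transpose_one, transpose_smul, transpose_vecMulVec]

theorem householder_map (φ : R →+* A) (c : R) (w : n → R) :
    (householder c w).map φ = householder (φ c) (φ ∘ w) := by
  ext i j
  simp only [householder, map_apply, Matrix.sub_apply, Matrix.smul_apply, vecMulVec_apply,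
    one_apply, smul_eq_mul, map_sub, _root_.map_mul, apply_ite φ, map_one, _root_.map_zero,
    Function.comp_apply]

variable [Fintype n]

theorem householder_mulVec (c : R) (w x : n → R) :
    householder c w *ᵥ x = x - (c * (w ⬝ᵥ x)) • w := by
  rw [householder, sub_mulVec, one_mulVec, smul_mulVec, vecMulVec_mulVec, op_smul_eq_smul,
    smul_smul]

theorem householder_mul_self {c : R} {w : n → R} (hc : c * (w ⬝ᵥ w) = 2) :
    householder c w * householder c w = 1 := by
  have h : (c • vecMulVec w w) * (c • vecMulVec w w) = (2 : R) • (c • vecMulVec w w) := by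
    rw [smul_mul_smul_comm, vecMulVec_mul_vecMulVec, vecMulVec_smul, smul_smul, smul_smul,
      mul_assoc, hc, mul_comm c]
  simp only [householder, _root_.mul_sub, _root_.sub_mul, h, one_mul, mul_one, two_smul]
  abel

theorem exists_householder_mulVec_eq {K : Type*} [Field K] [NeZero (2 : K)] {x y : n → K}
    (hxy : x ⬝ᵥ x = y ⬝ᵥ y) (hne : x ⬝ᵥ x ≠ x ⬝ᵥ y) :
    ∃ c, c * ((x - y) ⬝ᵥ (x - y)) = 2 ∧ householder c (x - y) *ᵥ x = y := by
  have hw : (x - y) ⬝ᵥ (x - y) = 2 * (x ⬝ᵥ x - x ⬝ᵥ y) := by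
    rw [sub_dotProduct, dotProduct_sub, dotProduct_sub, dotProduct_comm y x, ← hxy]
    ring
  have hne' : x ⬝ᵥ x - x ⬝ᵥ y ≠ 0 := sub_ne_zero.mpr hne
  refine ⟨(x ⬝ᵥ x - x ⬝ᵥ y)⁻¹, ?_, ?_⟩
  · rw [hw, mul_left_comm, inv_mul_cancel₀ hne', mul_one]
  · rw [householder_mulVec, sub_dotProduct, dotProduct_comm y x, inv_mul_cancel₀ hne', one_smul,
      sub_sub_cancel]

end Householder

section ReflectionInvariance

variable {F : Type} [Field F] {K : Type*} [Field K] [Algebra F K]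

variable (F) in
/-- The squared length of a generic vector, in the polynomial ring in the entries of a generic
vector (indexed by `Sum.inl`) and a generic matrix (indexed by `Sum.inr`). -/
noncomputable def genericNormSq : MvPolynomial (Fin 3 ⊕ Fin 3 × Fin 3) F :=
  (fun i => X (Sum.inl i)) ⬝ᵥ fun i => X (Sum.inl i)

/-- The difference between the values of `f` at the conjugate of the generic matrix by the
reflection along the generic vector and at the generic matrix itself. As `F` is infinite, it can be
shown to vanish by specialising to `F`-points, and then invariance under reflections follows over
every extension field. -/
noncomputable def reflectionDefect (f : Rpoly F 1) : Localization.Away (genericNormSq F) :=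
  let w : Fin 3 → Localization.Away (genericNormSq F) :=
    algebraMap (MvPolynomial (Fin 3 ⊕ Fin 3 × Fin 3) F) _ ∘ fun i => X (Sum.inl i)
  let M : Matrix (Fin 3) (Fin 3) (Localization.Away (genericNormSq F)) :=
    (of fun i j => X (Sum.inr (i, j))).map (algebraMap (MvPolynomial (Fin 3 ⊕ Fin 3 × Fin 3) F) _)
  let c := 2 * IsLocalization.Away.invSelf (genericNormSq F)
  evalAt (householder c w * M * householder c w) f - evalAt M f

theorem aeval_genericNormSq (w : Fin 3 → K) (M : Matrix (Fin 3) (Fin 3) K) :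
    aeval (Sum.elim w (Function.uncurry M)) (genericNormSq F) = w ⬝ᵥ w := by
  simp only [genericNormSq, dotProduct, map_sum, _root_.map_mul, aeval_X, Sum.elim_inl]

theorem exists_specialization_reflectionDefect [NeZero (2 : K)] {c : K} {w : Fin 3 → K}
    (hc : c * (w ⬝ᵥ w) = 2) (M : Matrix (Fin 3) (Fin 3) K) (f : Rpoly F 1) :
    ∃ φ : Localization.Away (genericNormSq F) →ₐ[F] K,
      (∀ a : MvPolynomial (Fin 3 ⊕ Fin 3 × Fin 3) F,
        φ (algebraMap _ _ a) = aeval (Sum.elim w (Function.uncurry M)) a) ∧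
      φ (reflectionDefect f) = evalAt (householder c w * M * householder c w) f - evalAt M f := by
  have hw : w ⬝ᵥ w ≠ 0 := right_ne_zero_of_mul (hc.trans_ne two_ne_zero)
  have hs : IsUnit (aeval (Sum.elim w (Function.uncurry M)) (genericNormSq F)) :=
    (aeval_genericNormSq (F := F) w M).symm ▸ hw.isUnit
  let φ : Localization.Away (genericNormSq F) →ₐ[F] K := IsLocalization.Away.liftAlgHom _ hs
  have hφ (a : MvPolynomial (Fin 3 ⊕ Fin 3 × Fin 3) F) :
      φ (algebraMap _ _ a) = aeval (Sum.elim w (Function.uncurry M)) a :=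
    IsLocalization.Away.lift_eq _ hs a
  have hφw : φ ∘ (algebraMap (MvPolynomial (Fin 3 ⊕ Fin 3 × Fin 3) F) _ ∘
      fun i => X (Sum.inl i)) = w :=
    funext fun i => (hφ _).trans (aeval_X _ _)
  have hφM : ((of fun i j => X (Sum.inr (i, j))).map
      (algebraMap (MvPolynomial (Fin 3 ⊕ Fin 3 × Fin 3) F) _)).map φ = M :=
    Matrix.ext fun i j => (hφ _).trans (aeval_X _ _)
  have hφc : φ (2 * IsLocalization.Away.invSelf (genericNormSq F)) = c := by
    refine mul_right_cancel₀ hw ?_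
    rw [hc, ← aeval_genericNormSq (F := F) w M, ← hφ, ← _root_.map_mul, mul_assoc,
      mul_comm (IsLocalization.Away.invSelf _), IsLocalization.Away.mul_invSelf, mul_one,
      map_ofNat]
  have hφH := householder_map (φ : Localization.Away (genericNormSq F) →+* K)
    (2 * IsLocalization.Away.invSelf (genericNormSq F))
    (algebraMap (MvPolynomial (Fin 3 ⊕ Fin 3 × Fin 3) F) _ ∘ fun i => X (Sum.inl i))
  rw [RingHom.coe_coe, hφc, hφw] at hφH
  refine ⟨φ, hφ, ?_⟩
  simp only [reflectionDefect, map_sub, map_evalAt, Matrix.map_mul, hφH, hφM]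

theorem evalAt_householder_conj_of_base {f : Rpoly F 1} (hf : f ∈ invAlg F 1) {c : F}
    {w : Fin 3 → F} (hc : c * (w ⬝ᵥ w) = 2) (M : Matrix (Fin 3) (Fin 3) F) :
    evalAt (householder c w * M * householder c w) f = evalAt M f := by
  have hH : (householder c w)ᵀ * householder c w = 1 := by
    rw [householder_transpose, householder_mul_self hc]
  simpa only [Algebra.algebraMap_self, RingHom.coe_id, Matrix.map_id, householder_transpose] using
    evalAt_conj_of_mem_invAlg hf hH M

theorem reflectionDefect_eq_zero [Infinite F] [NeZero (2 : F)] {f : Rpoly F 1}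
    (hf : f ∈ invAlg F 1) : reflectionDefect f = 0 := by
  obtain ⟨n, a, ha⟩ := IsLocalization.Away.surj (genericNormSq F) (reflectionDefect f)
  have hs : genericNormSq F ≠ 0 := by
    intro h
    simpa [h] using aeval_genericNormSq (F := F) (![1, 0, 0] : Fin 3 → F) 0
  have ha0 : a = 0 := by
    refine eq_zero_of_aeval_eq_zero_of_ne (K := F) hs fun x hx => ?_
    let w : Fin 3 → F := fun i => x (Sum.inl i)
    let M : Matrix (Fin 3) (Fin 3) F := of fun i j => x (Sum.inr (i, j))
    have hxwM : Sum.elim w (Function.uncurry M) = x := by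
      ext (i | p) <;> rfl
    have hc : 2 / (w ⬝ᵥ w) * (w ⬝ᵥ w) = 2 :=
      div_mul_cancel₀ _ (by rwa [← aeval_genericNormSq (F := F) w M, hxwM])
    obtain ⟨φ, hφ, hφf⟩ := exists_specialization_reflectionDefect hc M f
    rw [← hxwM, ← hφ, ← ha, _root_.map_mul, hφf, evalAt_householder_conj_of_base hf hc, sub_self,
      zero_mul]
  rw [ha0, _root_.map_zero] at ha
  exact (IsLocalization.Away.algebraMap_pow_isUnit (genericNormSq F) n).mul_left_eq_zero.mp ha

theorem evalAt_householder_conj [Infinite F] [NeZero (2 : F)] [NeZero (2 : K)] {f : Rpoly F 1}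
    (hf : f ∈ invAlg F 1) {c : K} {w : Fin 3 → K} (hc : c * (w ⬝ᵥ w) = 2)
    (M : Matrix (Fin 3) (Fin 3) K) :
    evalAt (householder c w * M * householder c w) f = evalAt M f := by
  obtain ⟨φ, -, hφf⟩ := exists_specialization_reflectionDefect hc M f
  rw [← sub_eq_zero, ← hφf, reflectionDefect_eq_zero hf, _root_.map_zero]

end ReflectionInvariance

section Slice

/-- The slice matrix with parameters `z`: its axial vector is `(0, 0, 2 z₅)`, and the third row
of its symmetric part is orthogonal to the first coordinate vector. -/
def sliceMatrix {R : Type*} [CommRing R] (z : Fin 6 → R) : Matrix (Fin 3) (Fin 3) R :=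
  !![z 0, z 4 - z 5, 0; z 4 + z 5, z 1, z 3; 0, z 3, z 2]

theorem sliceMatrix_map {R A G : Type*} [CommRing R] [CommRing A] [FunLike G R A]
    [RingHomClass G R A] (φ : G) (z : Fin 6 → R) :
    (sliceMatrix z).map φ = sliceMatrix (φ ∘ z) := by
  ext i j
  fin_cases i <;> fin_cases j <;> simp [sliceMatrix]

theorem invariants_sliceMatrix {R : Type*} [CommRing R] (z : Fin 6 → R) :
    invariants (sliceMatrix z) =
      ![2 * (z 0 + z 1 + z 2),
        4 * (z 0 * z 1 + z 0 * z 2 + z 1 * z 2 - z 3 ^ 2 - z 4 ^ 2),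
        8 * (z 0 * z 1 * z 2 - z 0 * z 3 ^ 2 - z 4 ^ 2 * z 2),
        4 * z 5 ^ 2, 8 * (z 5 ^ 2 * z 2), 16 * (z 5 ^ 2 * (z 2 ^ 2 + z 3 ^ 2)),
        -(64 * (z 5 ^ 2 * z 3 ^ 2 * (z 4 * z 5)))] := by
  ext i
  fin_cases i <;>
    simp [invariants, pairInvariants, sliceMatrix, axialVector, moment, krylov, pow_two,
      trace_fin_three, det_fin_three, adjugate_fin_three, mulVec, dotProduct,
      Fin.sum_univ_three, Matrix.mul_apply] <;> ring

theorem exists_eq_sliceMatrix {K : Type*} [Field K] [NeZero (2 : K)]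
    {M : Matrix (Fin 3) (Fin 3) K} (h₀ : M 2 0 = 0) (h₀' : M 0 2 = 0) (h₁ : M 2 1 = M 1 2) :
    ∃ z, M = sliceMatrix z := by
  refine ⟨![M 0 0, M 1 1, M 2 2, M 2 1, (M 1 0 + M 0 1) / 2, (M 1 0 - M 0 1) / 2], ?_⟩
  ext i j
  fin_cases i <;> fin_cases j <;> simp [sliceMatrix, h₀, h₀', h₁] <;> field_simp <;> ring

theorem invariants_of_axialVector_eq_zero {R : Type*} [CommRing R] {M : Matrix (Fin 3) (Fin 3) R}
    (h₀ : axialVector M 0 = 0) (h₁ : axialVector M 1 = 0) :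
    invariants M 3 * invariants M 5 - invariants M 4 ^ 2 =
      4 * axialVector M 2 ^ 4 * (M 2 0 ^ 2 + M 2 1 ^ 2) := by
  have h₁' : M 1 2 = M 2 1 := (sub_eq_zero.mp h₀).symm
  have h₀' : M 0 2 = M 2 0 := sub_eq_zero.mp h₁
  simp only [invariants, pairInvariants, axialVector, moment, pow_zero, pow_one, pow_two, mulVec,
    dotProduct, Fin.sum_univ_three, Matrix.mul_apply, Matrix.add_apply, transpose_apply,
    Matrix.one_apply, Fin.reduceEq, ↓reduceIte, cons_val, h₀', h₁']
  ring

theorem householder_conj_row_two {R : Type*} [CommRing R] {c : R} {w : Fin 3 → R} (hw : w 2 = 0)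
    (M : Matrix (Fin 3) (Fin 3) R) :
    (householder c w * M * householder c w) 2 = householder c w *ᵥ M 2 := by
  have hrow : householder c w 2 = Pi.single 2 1 := by
    ext j
    fin_cases j <;> simp [householder, vecMulVec_apply, hw]
  calc (householder c w * M * householder c w) 2
      = householder c w 2 ᵥ* M ᵥ* householder c w := by
        rw [Matrix.mul_apply_eq_vecMul, Matrix.mul_apply_eq_vecMul]
    _ = householder c w *ᵥ M 2 := by
        rw [hrow, single_one_vecMul, ← mulVec_transpose, householder_transpose, row]

/-- `N` is the conjugate of `M` by a reflection. -/
def IsReflectionConj {R : Type*} [CommRing R] (M N : Matrix (Fin 3) (Fin 3) R) : Prop :=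
  ∃ (c : R) (w : Fin 3 → R), c * (w ⬝ᵥ w) = 2 ∧ N = householder c w * M * householder c w

theorem IsReflectionConj.invariants_eq {R : Type*} [CommRing R] {M N : Matrix (Fin 3) (Fin 3) R}
    (h : IsReflectionConj M N) : invariants N = invariants M := by
  obtain ⟨c, w, hc, rfl⟩ := h
  have hH : (householder c w)ᵀ * householder c w = 1 := by
    rw [householder_transpose, householder_mul_self hc]
  simpa only [householder_transpose] using invariants_conj hH M

theorem axialVector_householder_conj {R : Type*} [CommRing R] {c : R} {w : Fin 3 → R}
    (hc : c * (w ⬝ᵥ w) = 2) (M : Matrix (Fin 3) (Fin 3) R) :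
    axialVector (householder c w * M * householder c w) =
      (householder c w).det • (householder c w *ᵥ axialVector M) := by
  have hH : (householder c w)ᵀ * householder c w = 1 := by
    rw [householder_transpose, householder_mul_self hc]
  have h := axialVector_conj (householder c w) M
  rwa [adjugate_of_orthogonal hH, smul_mulVec, householder_transpose] at h

variable {K : Type*} [Field K] [IsAlgClosed K] [NeZero (2 : K)]

theorem exists_sq_eq_and_ne {x : K} (hx : x ≠ 0) (y : K) : ∃ c, c ^ 2 = x ∧ c ≠ y := by
  obtain ⟨c, rfl⟩ := IsAlgClosed.exists_pow_nat_eq x two_pos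
  by_cases h : c = y
  · refine ⟨-c, neg_sq c, fun h' => hx ?_⟩
    have h2c : 2 * c = 0 := by linear_combination h - h'
    rw [(mul_eq_zero.mp h2c).resolve_left two_ne_zero, zero_pow two_ne_zero]
  · exact ⟨c, rfl, h⟩

theorem exists_isReflectionConj_axialVector {M : Matrix (Fin 3) (Fin 3) K}
    (h : invariants M 3 ≠ 0) :
    ∃ N, IsReflectionConj M N ∧ axialVector N 0 = 0 ∧ axialVector N 1 = 0 := by
  have hv : invariants M 3 = axialVector M ⬝ᵥ axialVector M := by
    simp [invariants, pairInvariants, moment]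
  obtain ⟨γ, hγ, hγv⟩ := exists_sq_eq_and_ne h (axialVector M 2)
  have hγ0 : γ ≠ 0 := by
    rintro rfl
    exact h (hγ.symm.trans (zero_pow two_ne_zero))
  obtain ⟨c, hc, hcv⟩ := exists_householder_mulVec_eq (x := axialVector M) (y := ![0, 0, γ])
    (by rw [← hv, ← hγ]; simp [dotProduct, Fin.sum_univ_three, sq])
    (by
      rw [← hv, ← hγ, sq]
      simpa [dotProduct, Fin.sum_univ_three, hγ0] using hγv)
  refine ⟨_, ⟨c, _, hc, rfl⟩, ?_⟩
  rw [axialVector_householder_conj hc, hcv]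
  simp

theorem exists_isReflectionConj_row_two {M : Matrix (Fin 3) (Fin 3) K} (h₀ : M 2 0 = M 0 2)
    (h₁ : M 2 1 = M 1 2) (h : M 2 0 ^ 2 + M 2 1 ^ 2 ≠ 0) :
    ∃ N, IsReflectionConj M N ∧ N 2 0 = 0 ∧ N 0 2 = 0 ∧ N 2 1 = N 1 2 := by
  obtain ⟨b, hb, hbM⟩ := exists_sq_eq_and_ne h (M 2 1)
  have hb0 : b ≠ 0 := by
    rintro rfl
    exact h (hb.symm.trans (zero_pow two_ne_zero))
  obtain ⟨c, hc, hcM⟩ := exists_householder_mulVec_eq (x := M 2) (y := ![0, b, M 2 2])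
    (by simp [dotProduct, Fin.sum_univ_three, ← sq, hb])
    (by
      have hne : b ^ 2 ≠ M 2 1 * b := by simpa [sq, hb0] using hbM
      simpa [dotProduct, Fin.sum_univ_three, ← sq, hb] using hne)
  have hw : (M 2 - ![0, b, M 2 2]) 2 = 0 := by simp
  have hcol : Mᵀ 2 = M 2 := by
    ext i
    fin_cases i <;> simp [transpose_apply, h₀, h₁]
  set H := householder c (M 2 - ![0, b, M 2 2]) with hH
  have hrow (M' : Matrix (Fin 3) (Fin 3) K) (hM' : M' 2 = M 2) :
      (H * M' * H) 2 = ![0, b, M 2 2] := by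
    rw [householder_conj_row_two hw, hM', hcM]
  have hcol' : (H * M * H)ᵀ = H * Mᵀ * H := by
    rw [transpose_mul, transpose_mul, hH, householder_transpose, mul_assoc]
  have hN₂ : (H * M * H) 2 = ![0, b, M 2 2] := hrow M rfl
  have hN₂' : (H * M * H)ᵀ 2 = ![0, b, M 2 2] := hcol' ▸ hrow Mᵀ hcol
  exact ⟨_, ⟨c, _, hc, rfl⟩, congrFun hN₂ 0, congrFun hN₂' 0,
    (congrFun hN₂ 1).trans (congrFun hN₂' 1).symm⟩

/-- The product of the leading principal minors of order 1 and 2 of the Gram matrix of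
`v, S v, S² v`; matrices at which it does not vanish can be moved into the slice. -/
def minorProduct {R : Type*} [CommRing R] (y : Fin 6 → R) : R := y 3 * (y 3 * y 5 - y 4 ^ 2)

variable {F : Type} [Field F] [Infinite F] [NeZero (2 : F)] [Algebra F K]

theorem exists_evalAt_sliceMatrix_eq {M : Matrix (Fin 3) (Fin 3) K}
    (h : (minorProduct fun i => invariants M i.castSucc) ≠ 0) :
    ∃ z : Fin 6 → K, ∀ f ∈ invAlg F 1, evalAt (sliceMatrix z) f = evalAt M f := by
  obtain ⟨N, hMN, hN₀, hN₁⟩ := exists_isReflectionConj_axialVector (left_ne_zero_of_mul h)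
  have hN : N 2 0 ^ 2 + N 2 1 ^ 2 ≠ 0 := by
    refine right_ne_zero_of_mul (a := 4 * axialVector N 2 ^ 4) ?_
    rw [← invariants_of_axialVector_eq_zero hN₀ hN₁, hMN.invariants_eq]
    exact right_ne_zero_of_mul h
  obtain ⟨N', hNN', h₀, h₀', h₁⟩ :=
    exists_isReflectionConj_row_two (sub_eq_zero.mp hN₁).symm (sub_eq_zero.mp hN₀) hN
  obtain ⟨z, rfl⟩ := exists_eq_sliceMatrix h₀ h₀' h₁
  refine ⟨z, fun f hf => ?_⟩
  obtain ⟨c, w, hc, rfl⟩ := hMN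
  obtain ⟨c', w', hc', hz⟩ := hNN'
  rw [hz, evalAt_householder_conj hf hc', evalAt_householder_conj hf hc]

end Slice

section Restriction

variable {F : Type} [Field F]

theorem map_minorProduct {R A : Type*} [CommRing R] [CommRing A] (φ : R →+* A) (y : Fin 6 → R) :
    φ (minorProduct y) = minorProduct (φ ∘ y) := by
  simp only [minorProduct, map_sub, _root_.map_mul, map_pow, Function.comp_apply]

variable (F) in
/-- Substitution of the first six basic invariants into a polynomial. -/
noncomputable def evenSubst : MvPolynomial (Fin 6) F →ₐ[F] Rpoly F 1 :=
  aeval fun i => basicInvariant F i.castSucc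

theorem evalAt_evenSubst {A : Type*} [CommRing A] [Algebra F A] (M : Matrix (Fin 3) (Fin 3) A)
    (P : MvPolynomial (Fin 6) F) :
    evalAt M (evenSubst F P) = aeval (fun i => invariants M i.castSucc) P := by
  rw [evenSubst, ← AlgHom.comp_apply, comp_aeval]
  simp only [evalAt_basicInvariant]

theorem minorProduct_sliceMatrix {R : Type*} [CommRing R] (z : Fin 6 → R) :
    minorProduct (fun i => invariants (sliceMatrix z) i.castSucc) = 256 * z 5 ^ 6 * z 3 ^ 2 := by
  simp only [minorProduct, invariants_sliceMatrix, Fin.reduceCastSucc, cons_val]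
  ring

theorem evalAt_evenSubst_minorProduct {A : Type*} [CommRing A] [Algebra F A]
    (M : Matrix (Fin 3) (Fin 3) A) :
    evalAt M (evenSubst F (minorProduct X)) =
      minorProduct fun i => invariants M i.castSucc := by
  rw [evalAt_evenSubst]
  simpa [Function.comp_def] using
    map_minorProduct (aeval (R := F) fun i => invariants M i.castSucc).toRingHom X

theorem neZero_two_of_algebra (F : Type*) [Field F] [NeZero (2 : F)] (A : Type*) [CommRing A]
    [Nontrivial A] [Algebra F A] : NeZero (2 : A) where
  out := by
    rw [← map_ofNat (algebraMap F A) 2]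
    exact (map_ne_zero _).mpr two_ne_zero

theorem evenSubst_minorProduct_ne_zero [NeZero (2 : F)] :
    evenSubst F (minorProduct X) ≠ 0 := by
  intro h
  have h' := evalAt_evenSubst_minorProduct (F := F)
    (sliceMatrix (X : Fin 6 → MvPolynomial (Fin 6) F))
  rw [h, _root_.map_zero, minorProduct_sliceMatrix] at h'
  have := neZero_two_of_algebra F (MvPolynomial (Fin 6) F)
  have h256 : (256 : MvPolynomial (Fin 6) F) ≠ 0 := by
    rw [show (256 : MvPolynomial (Fin 6) F) = 2 ^ 8 by norm_num]
    exact pow_ne_zero 8 two_ne_zero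
  exact mul_ne_zero (mul_ne_zero h256 (pow_ne_zero _ (X_ne_zero 5)))
    (pow_ne_zero _ (X_ne_zero 3)) h'.symm

theorem aeval_eq_evalAt {A : Type*} [CommRing A] [Algebra F A]
    (x : Fin 3 × Fin 3 × Fin 1 → A) (f : Rpoly F 1) :
    aeval x f = evalAt (of fun i j => x (i, j, 0)) f := by
  rw [evalAt]
  congr 2
  ext ⟨i, j, k⟩
  rw [of_apply, Subsingleton.elim k 0]

variable [Infinite F] [NeZero (2 : F)]

theorem eq_zero_of_evalAt_sliceMatrix_eq_zero {f : Rpoly F 1} (hf : f ∈ invAlg F 1)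
    (h : evalAt (sliceMatrix (X : Fin 6 → MvPolynomial (Fin 6) F)) f = 0) : f = 0 := by
  have := neZero_two_of_algebra F (AlgebraicClosure F)
  refine eq_zero_of_aeval_eq_zero_of_ne (K := AlgebraicClosure F)
    evenSubst_minorProduct_ne_zero fun x hx => ?_
  rw [aeval_eq_evalAt] at hx ⊢
  rw [evalAt_evenSubst_minorProduct] at hx
  obtain ⟨z, hz⟩ := exists_evalAt_sliceMatrix_eq (F := F) hx
  have hX : (sliceMatrix (X : Fin 6 → MvPolynomial (Fin 6) F)).map (aeval z) = sliceMatrix z := by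
    rw [sliceMatrix_map]
    simp only [Function.comp_def, aeval_X]
  rw [← hz f hf, ← hX, ← map_evalAt, h, _root_.map_zero]

end Restriction

section Saturation

variable {F : Type*} [Field F]

/-- The saturation of a subalgebra `B` at `d ∈ B`: the elements that become members of `B` after
multiplication by some power of `d`. -/
def saturation {A : Type*} [CommRing A] [Algebra F A] (B : Subalgebra F A) (d : B) :
    Subalgebra F A where
  carrier := {a | ∃ n : ℕ, (d : A) ^ n * a ∈ B}
  mul_mem' := by
    rintro a b ⟨m, ha⟩ ⟨n, hb⟩
    refine ⟨m + n, ?_⟩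
    rw [pow_add, mul_mul_mul_comm]
    exact mul_mem ha hb
  add_mem' := by
    rintro a b ⟨m, ha⟩ ⟨n, hb⟩
    refine ⟨m + n, ?_⟩
    have h : (d : A) ^ (m + n) * (a + b) = d ^ n * (d ^ m * a) + d ^ m * (d ^ n * b) := by ring
    rw [h]
    exact add_mem (mul_mem (pow_mem d.2 n) ha) (mul_mem (pow_mem d.2 m) hb)
  algebraMap_mem' r := ⟨0, by simpa only [pow_zero, one_mul] using B.algebraMap_mem r⟩

theorem le_saturation {A : Type*} [CommRing A] [Algebra F A] (B : Subalgebra F A) (d : B) :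
    B ≤ saturation B d :=
  fun a ha => ⟨0, by simpa only [pow_zero, one_mul] using ha⟩

theorem mem_saturation_of_mul_mem {A : Type*} [CommRing A] [Algebra F A] {B : Subalgebra F A}
    {d : B} {u u' a : A} (hu : u' * u = d) (hu' : u' ∈ saturation B d)
    (h : u * a ∈ saturation B d) : a ∈ saturation B d := by
  obtain ⟨n, hn⟩ := mul_mem hu' h
  refine ⟨n + 1, ?_⟩
  have h' : (d : A) ^ (n + 1) * a = d ^ n * (u' * (u * a)) := by
    rw [pow_succ, mul_assoc, ← mul_assoc u', hu]
  exact h' ▸ hn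

theorem mem_of_two_pow_mul_mem [NeZero (2 : F)] {A : Type*} [CommRing A] [Algebra F A]
    {B : Subalgebra F A} {k : ℕ} {a : A} (h : 2 ^ k * a ∈ B) : a ∈ B := by
  have hk : (2 : F) ^ k ≠ 0 := pow_ne_zero k two_ne_zero
  rw [← map_ofNat (algebraMap F A) 2, ← map_pow, ← Algebra.smul_def] at h
  exact (B.toSubmodule.smul_mem_iff hk).mp h

end Saturation

section SliceAlgebra

variable (F : Type*) [Field F]

/-- The algebra generated by the restrictions of the seven basic invariants to the slice. -/
noncomputable def sliceAlgebra : Subalgebra F (MvPolynomial (Fin 6) F) :=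
  (aeval (invariants (sliceMatrix (X : Fin 6 → MvPolynomial (Fin 6) F)))).range

theorem invariants_mem_sliceAlgebra (i : Fin 7) :
    invariants (sliceMatrix X) i ∈ sliceAlgebra F :=
  ⟨X i, aeval_X _ _⟩

/-- The restriction to the slice of `minorProduct`, evaluated at the first six invariants. -/
noncomputable def sliceMinor : sliceAlgebra F :=
  ⟨minorProduct fun i => invariants (sliceMatrix X) i.castSucc, by
    have h := invariants_mem_sliceAlgebra F
    exact mul_mem (h 3) (sub_mem (mul_mem (h 3) (h 5)) (pow_mem (h 4) 2))⟩

theorem coe_sliceMinor :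
    (sliceMinor F : MvPolynomial (Fin 6) F) = 256 * X 5 ^ 6 * X 3 ^ 2 :=
  minorProduct_sliceMatrix X

/-- The polynomials on the slice that are fractions of the seven basic invariants with a power of
`minorProduct` as denominator. -/
noncomputable def sliceFractions : Subalgebra F (MvPolynomial (Fin 6) F) :=
  saturation (sliceAlgebra F) (sliceMinor F)

theorem invariants_mem_sliceFractions (i : Fin 7) :
    invariants (sliceMatrix X) i ∈ sliceFractions F :=
  le_saturation _ _ (invariants_mem_sliceAlgebra F i)

variable {F}

theorem mem_sliceFractions_of_X_five_sq_mul_mem {a : MvPolynomial (Fin 6) F}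
    (h : 4 * (X 5 ^ 2 * a) ∈ sliceFractions F) : a ∈ sliceFractions F := by
  have hg := invariants_mem_sliceFractions F
  have hu' := sub_mem (mul_mem (hg 3) (hg 5)) (pow_mem (hg 4) 2)
  refine mem_saturation_of_mul_mem (u := 4 * X 5 ^ 2) ?_ hu' (by rwa [mul_assoc])
  simp only [coe_sliceMinor, invariants_sliceMatrix, cons_val]
  ring

variable [NeZero (2 : F)]

theorem X_five_sq_mem_sliceFractions : X 5 ^ 2 ∈ sliceFractions F := by
  have h := invariants_mem_sliceFractions F 3
  refine mem_of_two_pow_mul_mem (k := 2) ?_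
  convert h using 1
  simp only [invariants_sliceMatrix, cons_val]
  ring

theorem X_two_mem_sliceFractions : X 2 ∈ sliceFractions F := by
  have h := invariants_mem_sliceFractions F 4
  refine mem_of_two_pow_mul_mem (k := 1) (mem_sliceFractions_of_X_five_sq_mul_mem ?_)
  convert h using 1
  simp only [invariants_sliceMatrix, cons_val]
  ring

theorem X_three_sq_mem_sliceFractions : X 3 ^ 2 ∈ sliceFractions F := by
  have h := invariants_mem_sliceFractions F 5
  refine mem_of_two_pow_mul_mem (k := 2) (mem_sliceFractions_of_X_five_sq_mul_mem ?_)
  convert sub_mem h (mul_mem (ofNat_mem _ 16)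
    (mul_mem X_five_sq_mem_sliceFractions (pow_mem X_two_mem_sliceFractions 2))) using 1
  simp only [invariants_sliceMatrix, cons_val]
  ring

theorem mem_sliceFractions_of_X_three_sq_mul_mem {a : MvPolynomial (Fin 6) F}
    (h : X 3 ^ 2 * a ∈ sliceFractions F) : a ∈ sliceFractions F := by
  have hu' := mul_mem (ofNat_mem (sliceFractions F) 256)
    (pow_mem (X_five_sq_mem_sliceFractions (F := F)) 3)
  refine mem_saturation_of_mul_mem ?_ hu' h
  rw [coe_sliceMinor]
  ring

theorem X_four_mul_X_five_mem_sliceFractions : X 4 * X 5 ∈ sliceFractions F := by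
  have h := invariants_mem_sliceFractions F 6
  refine mem_of_two_pow_mul_mem (k := 4) (mem_sliceFractions_of_X_three_sq_mul_mem
    (mem_sliceFractions_of_X_five_sq_mul_mem ?_))
  convert neg_mem h using 1
  simp only [invariants_sliceMatrix, cons_val]
  ring

theorem X_four_sq_mem_sliceFractions : X 4 ^ 2 ∈ sliceFractions F := by
  refine mem_sliceFractions_of_X_five_sq_mul_mem ?_
  convert mul_mem (ofNat_mem (sliceFractions F) 4)
    (pow_mem (X_four_mul_X_five_mem_sliceFractions (F := F)) 2) using 1
  ring

theorem X_zero_add_X_one_mem_sliceFractions : X 0 + X 1 ∈ sliceFractions F := by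
  have h := invariants_mem_sliceFractions F 0
  refine mem_of_two_pow_mul_mem (k := 1) ?_
  convert sub_mem h (mul_mem (ofNat_mem _ 2) X_two_mem_sliceFractions) using 1
  simp only [invariants_sliceMatrix, cons_val]
  ring

theorem X_zero_mul_X_one_mem_sliceFractions : X 0 * X 1 ∈ sliceFractions F := by
  have h := invariants_mem_sliceFractions F 1
  have h' := sub_mem (mul_mem X_zero_add_X_one_mem_sliceFractions X_two_mem_sliceFractions)
    (add_mem X_three_sq_mem_sliceFractions (X_four_sq_mem_sliceFractions (F := F)))
  refine mem_of_two_pow_mul_mem (k := 2) ?_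
  convert sub_mem h (mul_mem (ofNat_mem _ 4) h') using 1
  simp only [invariants_sliceMatrix, cons_val]
  ring

theorem X_zero_mem_sliceFractions : X 0 ∈ sliceFractions F := by
  have h := invariants_mem_sliceFractions F 2
  have h' := mul_mem (sub_mem X_zero_mul_X_one_mem_sliceFractions
    (X_four_sq_mem_sliceFractions (F := F))) X_two_mem_sliceFractions
  refine mem_of_two_pow_mul_mem (k := 3) (mem_sliceFractions_of_X_three_sq_mul_mem ?_)
  convert sub_mem (mul_mem (ofNat_mem _ 8) h') h using 1
  simp only [invariants_sliceMatrix, cons_val]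
  ring

theorem X_one_mem_sliceFractions : X 1 ∈ sliceFractions F := by
  simpa only [add_sub_cancel_left] using
    sub_mem X_zero_add_X_one_mem_sliceFractions (X_zero_mem_sliceFractions (F := F))

end SliceAlgebra

section SignChanges

theorem coeff_aeval_C_mul_X {R σ : Type*} [CommSemiring R] [Fintype σ] (c : σ → R)
    (p : MvPolynomial σ R) (m : σ →₀ ℕ) :
    coeff m (aeval (fun i => C (c i) * X i) p) = (∏ i, c i ^ m i) * coeff m p := by
  classical
  induction p using MvPolynomial.induction_on' with
  | monomial u a =>
    have h : aeval (fun i => C (c i) * X i) (monomial u a) = monomial u ((∏ i, c i ^ u i) * a) := by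
      rw [aeval_monomial, algebraMap_eq, monomial_eq, Finsupp.prod_fintype _ _ (by simp),
        Finsupp.prod_fintype _ _ (by simp)]
      simp only [mul_pow, Finset.prod_mul_distrib, C_mul, map_prod, map_pow]
      ring
    rw [h, coeff_monomial, coeff_monomial]
    split_ifs with hu
    · rw [hu]
    · rw [mul_zero]
  | add p q hp hq => rw [map_add, coeff_add, hp, hq, coeff_add, mul_add]

theorem even_of_neg_one_pow_mul_eq {R : Type*} [Ring R] [NoZeroDivisors R] [NeZero (2 : R)]
    {k : ℕ} {a : R} (h : (-1) ^ k * a = a) (ha : a ≠ 0) : Even k := by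
  by_contra hk
  rw [Nat.not_even_iff_odd] at hk
  rw [hk.neg_one_pow, neg_one_mul, neg_eq_iff_add_eq_zero, ← two_mul] at h
  exact (mul_ne_zero two_ne_zero ha) h

theorem pow_mul_pow_mem_of_even {R : Type*} [CommSemiring R] {S : Type*} [SetLike S R]
    [SubmonoidClass S R] {s : S} {x y : R} (hx : x ^ 2 ∈ s) (hy : y ^ 2 ∈ s) (hxy : x * y ∈ s)
    {k l : ℕ} (h : Even (k + l)) : x ^ k * y ^ l ∈ s := by
  rcases Nat.even_or_odd' k with ⟨i, rfl | rfl⟩ <;> rcases Nat.even_or_odd' l with ⟨j, rfl | rfl⟩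
  · rw [pow_mul, pow_mul]
    exact mul_mem (pow_mem hx i) (pow_mem hy j)
  · exact absurd h (by grind)
  · exact absurd h (by grind)
  · have h' : x ^ (2 * i + 1) * y ^ (2 * j + 1) = (x ^ 2) ^ i * (y ^ 2) ^ j * (x * y) := by ring
    rw [h']
    exact mul_mem (mul_mem (pow_mem hx i) (pow_mem hy j)) hxy

theorem mem_sliceFractions_of_sign_invariant {F : Type*} [Field F] [NeZero (2 : F)]
    {p : MvPolynomial (Fin 6) F}
    (h₁ : aeval (fun i => C ((![1, 1, 1, -1, 1, 1] : Fin 6 → F) i) * X i) p = p)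
    (h₂ : aeval (fun i => C ((![1, 1, 1, 1, -1, -1] : Fin 6 → F) i) * X i) p = p) :
    p ∈ sliceFractions F := by
  rw [p.as_sum]
  refine sum_mem fun m hm => ?_
  rw [mem_support_iff] at hm
  have hc₁ := congrArg (coeff m) h₁
  have hc₂ := congrArg (coeff m) h₂
  rw [coeff_aeval_C_mul_X] at hc₁ hc₂
  obtain ⟨k, hk⟩ : Even (m 3) :=
    even_of_neg_one_pow_mul_eq (by simpa [Fin.prod_univ_six] using hc₁) hm
  have h₄₅ : Even (m 4 + m 5) :=
    even_of_neg_one_pow_mul_eq (by simpa [Fin.prod_univ_six, pow_add] using hc₂) hm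
  rw [monomial_eq, Finsupp.prod_fintype _ _ (by simp), Fin.prod_univ_six, mul_assoc _ (X 4 ^ m 4),
    hk, ← two_mul, pow_mul]
  exact mul_mem ((sliceFractions F).algebraMap_mem _) (mul_mem (mul_mem (mul_mem (mul_mem
    (pow_mem X_zero_mem_sliceFractions _) (pow_mem X_one_mem_sliceFractions _))
    (pow_mem X_two_mem_sliceFractions _)) (pow_mem X_three_sq_mem_sliceFractions _))
    (pow_mul_pow_mem_of_even X_four_sq_mem_sliceFractions X_five_sq_mem_sliceFractions
      X_four_mul_X_five_mem_sliceFractions h₄₅))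

end SignChanges

section Fractions

variable {F : Type} [Field F]

theorem aeval_mem_of_forall_mem {A σ : Type*} [CommSemiring A] [Algebra F A] {S : Subalgebra F A}
    {x : σ → A} (hx : ∀ i, x i ∈ S) (p : MvPolynomial σ F) : aeval x p ∈ S := by
  have hle : Algebra.adjoin F (Set.range x) ≤ S :=
    Algebra.adjoin_le (Set.range_subset_iff.mpr hx)
  exact hle (Algebra.adjoin_range_eq_range_aeval F x ▸ ⟨p, rfl⟩)

theorem aeval_basicInvariant_mem_invAlg (Q : MvPolynomial (Fin 7) F) :
    aeval (basicInvariant F) Q ∈ invAlg F 1 :=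
  aeval_mem_of_forall_mem basicInvariant_mem_invAlg Q

theorem evenSubst_mem_invAlg (P : MvPolynomial (Fin 6) F) : evenSubst F P ∈ invAlg F 1 := by
  have h (i : Fin 6) : basicInvariant F i.castSucc ∈ invAlg F 1 := basicInvariant_mem_invAlg _
  exact aeval_mem_of_forall_mem h P

theorem evalAt_aeval_basicInvariant {A : Type*} [CommRing A] [Algebra F A]
    (M : Matrix (Fin 3) (Fin 3) A) (Q : MvPolynomial (Fin 7) F) :
    evalAt M (aeval (basicInvariant F) Q) = aeval (invariants M) Q := by
  rw [← AlgHom.comp_apply, comp_aeval]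
  simp only [evalAt_basicInvariant]

theorem aeval_evalAt_sliceMatrix_of_diagonal {f : Rpoly F 1} (hf : f ∈ invAlg F 1)
    {g : Fin 3 → F} {c : Fin 6 → F} (hg : ∀ i, g i * g i = 1)
    (hgc : (diagonal (C ∘ g))ᵀ * sliceMatrix X * diagonal (C ∘ g) =
      sliceMatrix fun i => C (c i) * (X i : MvPolynomial (Fin 6) F)) :
    aeval (fun i => C (c i) * (X i : MvPolynomial (Fin 6) F))
      (evalAt (sliceMatrix (X : Fin 6 → MvPolynomial (Fin 6) F)) f) =
        evalAt (sliceMatrix X) f := by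
  have hortho : (diagonal g)ᵀ * diagonal g = 1 := by
    rw [diagonal_transpose, diagonal_mul_diagonal, funext hg]
    exact diagonal_one
  rw [map_evalAt, sliceMatrix_map, ← evalAt_conj_of_mem_invAlg hf hortho (sliceMatrix X),
    diagonal_map (_root_.map_zero _), algebraMap_eq]
  simp only [Function.comp_def, aeval_X, ← hgc]

variable [NeZero (2 : F)]

theorem evalAt_sliceMatrix_mem_sliceFractions {f : Rpoly F 1} (hf : f ∈ invAlg F 1) :
    evalAt (sliceMatrix X) f ∈ sliceFractions F := by
  apply mem_sliceFractions_of_sign_invariant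
  · refine aeval_evalAt_sliceMatrix_of_diagonal hf (g := ![1, 1, -1]) ?_ ?_
    · simp [Fin.forall_fin_succ]
    · ext i j : 2
      fin_cases i <;> fin_cases j <;> simp [sliceMatrix]
  · refine aeval_evalAt_sliceMatrix_of_diagonal hf (g := ![-1, 1, 1]) ?_ ?_
    · simp [Fin.forall_fin_succ]
    · ext i j : 2
      fin_cases i <;> fin_cases j <;> simp [sliceMatrix] <;> ring

theorem exists_evenSubst_pow_mul_eq [Infinite F] {f : Rpoly F 1} (hf : f ∈ invAlg F 1) :
    ∃ (n : ℕ) (Q : MvPolynomial (Fin 7) F),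
      evenSubst F (minorProduct X) ^ n * f = aeval (basicInvariant F) Q := by
  obtain ⟨n, Q, hQ⟩ := evalAt_sliceMatrix_mem_sliceFractions hf
  refine ⟨n, Q, sub_eq_zero.mp (eq_zero_of_evalAt_sliceMatrix_eq_zero (sub_mem (mul_mem
    (pow_mem (evenSubst_mem_invAlg _) n) hf) (aeval_basicInvariant_mem_invAlg Q)) ?_)⟩
  have hd : evalAt (sliceMatrix X) (evenSubst F (minorProduct X)) =
      (sliceMinor F : MvPolynomial (Fin 6) F) := evalAt_evenSubst_minorProduct _
  rw [map_sub, _root_.map_mul, map_pow, hd, evalAt_aeval_basicInvariant, sub_eq_zero]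
  exact hQ.symm

end Fractions

section Realization

variable {K : Type*} [Field K]

theorem exists_moment_diagonal_eq [IsAlgClosed K] {n : ℕ} {s : Fin n → K}
    (hs : Function.Injective s) (t : Fin n → K) :
    ∃ v, ∀ k : Fin n, moment (diagonal s) v k = t k := by
  have hdet : IsUnit (vandermonde s)ᵀ := by
    rw [isUnit_transpose, isUnit_iff_isUnit_det, isUnit_iff_ne_zero]
    exact det_vandermonde_ne_zero_iff.mpr hs
  obtain ⟨w, hw⟩ := mulVec_surjective_iff_isUnit.mpr hdet t
  choose v hv using fun i => IsAlgClosed.exists_eq_mul_self (w i)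
  refine ⟨v, fun k => ?_⟩
  rw [← hw, moment, diagonal_pow]
  refine Finset.sum_congr rfl fun i _ => ?_
  change _ = s i ^ (k : ℕ) * w i
  rw [mulVec_diagonal, hv, Pi.pow_apply]
  ring

theorem exists_add_transpose_eq_and_axialVector_eq [NeZero (2 : K)] {S : Matrix (Fin 3) (Fin 3) K}
    (hS : Sᵀ = S) (v : Fin 3 → K) : ∃ M, M + Mᵀ = S ∧ axialVector M = v := by
  have h2 : (2 : K) ≠ 0 := two_ne_zero
  have hS' (i j : Fin 3) : S i j = S j i := congrFun (congrFun hS j) i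
  refine ⟨(2⁻¹ : K) • (S + !![0, -v 2, v 1; v 2, 0, -v 0; -v 1, v 0, 0]), ?_, ?_⟩
  · ext i j
    fin_cases i <;> fin_cases j <;> simp [hS' 1 0, hS' 2 0, hS' 2 1] <;> field_simp <;> ring
  · ext i
    fin_cases i <;> simp [axialVector, hS' 1 0, hS' 2 0, hS' 2 1] <;> field_simp <;> ring

/-- The discriminant of the characteristic polynomial of `M + Mᵀ`, in terms of the first six basic
invariants of `M`. -/
def charDiscr {R : Type*} [CommRing R] (y : Fin 6 → R) : R :=
  Cubic.discr ⟨1, -y 0, y 1, -y 2⟩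

theorem map_charDiscr {R A : Type*} [CommRing R] [CommRing A] (φ : R →+* A) (y : Fin 6 → R) :
    φ (charDiscr y) = charDiscr (φ ∘ y) := by
  have hofNat (n : ℕ) [n.AtLeastTwo] : φ ofNat(n) = ofNat(n) := map_ofNat φ n
  simp [charDiscr, Cubic.discr, hofNat]

theorem aeval_charDiscr {k A : Type*} [CommRing k] [CommRing A] [Algebra k A] (y : Fin 6 → A) :
    aeval y (charDiscr (X : Fin 6 → MvPolynomial (Fin 6) k)) = charDiscr y := by
  simpa [Function.comp_def] using map_charDiscr (aeval (R := k) y).toRingHom X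

theorem aeval_gramDet {k A : Type*} [CommRing k] [CommRing A] [Algebra k A] (y : Fin 6 → A) :
    aeval y (gramDet (X : Fin 6 → MvPolynomial (Fin 6) k)) = gramDet y := by
  simpa [Function.comp_def] using map_gramDet (aeval (R := k) y).toRingHom X

variable [IsAlgClosed K]

theorem exists_diagonal_of_charDiscr_ne_zero {y : Fin 6 → K} (hy : charDiscr y ≠ 0) :
    ∃ s : Fin 3 → K, Function.Injective s ∧ (diagonal s).trace = y 0 ∧
      (diagonal s).adjugate.trace = y 1 ∧ (diagonal s).det = y 2 := by
  let P : Cubic K := ⟨1, -y 0, y 1, -y 2⟩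
  have ha : P.a ≠ 0 := one_ne_zero
  obtain ⟨a, b, c, hroots⟩ :=
    (Cubic.splits_iff_roots_eq_three (φ := RingHom.id K) ha).mp (IsAlgClosed.splits _)
  obtain ⟨hab, hac, hbc⟩ := (Cubic.discr_ne_zero_iff_roots_ne ha hroots).mp hy
  have h₀ : -y 0 = 1 * -(a + b + c) := Cubic.b_eq_three_roots ha hroots
  have h₁ : y 1 = 1 * (a * b + a * c + b * c) := Cubic.c_eq_three_roots ha hroots
  have h₂ : -y 2 = 1 * -(a * b * c) := Cubic.d_eq_three_roots ha hroots
  refine ⟨![a, b, c], ?_, ?_, ?_, ?_⟩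
  · intro i j h
    fin_cases i <;> fin_cases j <;> simp_all [eq_comm]
  · rw [trace_diagonal, Fin.sum_univ_three]
    change a + b + c = y 0
    linear_combination h₀
  · rw [trace_fin_three, adjugate_fin_three]
    simp only [of_apply, cons_val, diagonal_apply, Fin.reduceEq, ↓reduceIte]
    linear_combination -h₁
  · rw [det_diagonal, Fin.prod_univ_three]
    change a * b * c = y 2
    linear_combination h₂

theorem exists_invariants_castSucc_eq [NeZero (2 : K)] {y : Fin 6 → K} (hy : charDiscr y ≠ 0) :
    ∃ M, ∀ i : Fin 6, invariants M i.castSucc = y i := by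
  obtain ⟨s, hs, h₀, h₁, h₂⟩ := exists_diagonal_of_charDiscr_ne_zero hy
  obtain ⟨v, hv⟩ := exists_moment_diagonal_eq hs ![y 3, y 4, y 5]
  obtain ⟨M, hM, hMv⟩ := exists_add_transpose_eq_and_axialVector_eq (diagonal_transpose s) v
  refine ⟨M, fun i => ?_⟩
  rw [invariants, hM, hMv]
  fin_cases i
  exacts [h₀, h₁, h₂, hv 0, hv 1, hv 2]

end Realization

section NormalForms

variable {F : Type} [Field F]

theorem basicInvariant_last_sq : basicInvariant F 6 ^ 2 = evenSubst F (gramDet X) := by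
  rw [basicInvariant, invariants_last_sq]
  exact (aeval_gramDet _).symm

variable (F) in
/-- The invariants of the form `P(b₀, …, b₅) + b₆ Q(b₀, …, b₅)`, where the `bᵢ` are the basic
invariants. They form an algebra because `b₆²` is a polynomial in `b₀, …, b₅`. -/
noncomputable def normalForms : Subalgebra F (Rpoly F 1) where
  carrier := {f | ∃ P Q, f = evenSubst F P + basicInvariant F 6 * evenSubst F Q}
  mul_mem' := by
    rintro _ _ ⟨P, Q, rfl⟩ ⟨P', Q', rfl⟩
    refine ⟨P * P' + gramDet X * (Q * Q'), P * Q' + Q * P', ?_⟩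
    simp only [map_add, _root_.map_mul, ← basicInvariant_last_sq]
    ring
  add_mem' := by
    rintro _ _ ⟨P, Q, rfl⟩ ⟨P', Q', rfl⟩
    refine ⟨P + P', Q + Q', ?_⟩
    simp only [map_add]
    ring
  algebraMap_mem' r := ⟨C r, 0, by simp [evenSubst]⟩

theorem basicInvariant_mem_normalForms (i : Fin 7) : basicInvariant F i ∈ normalForms F := by
  induction i using Fin.lastCases with
  | last => exact ⟨0, 1, by simp⟩
  | cast i => exact ⟨X i, 0, by simp [evenSubst]⟩

theorem aeval_basicInvariant_mem_normalForms (Q : MvPolynomial (Fin 7) F) :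
    aeval (basicInvariant F) Q ∈ normalForms F :=
  aeval_mem_of_forall_mem basicInvariant_mem_normalForms Q

variable (F) in
/-- Transposition of the generic matrix, as an endomorphism of the polynomial ring. -/
noncomputable def transposeHom : Rpoly F 1 →ₐ[F] Rpoly F 1 :=
  evalAt (genMat F 1 0)ᵀ

theorem transposeHom_evenSubst (P : MvPolynomial (Fin 6) F) :
    transposeHom F (evenSubst F P) = evenSubst F P := by
  rw [transposeHom, evalAt_evenSubst]
  simp only [invariants_transpose_castSucc]
  rfl

theorem transposeHom_basicInvariant_last :
    transposeHom F (basicInvariant F 6) = -basicInvariant F 6 := by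
  rw [transposeHom, evalAt_basicInvariant, invariants_transpose_last, basicInvariant]

theorem dvd_of_forall_aeval_eq_zero {σ K : Type*} [Finite σ] [Field K] [IsAlgClosed K]
    [Algebra F K] {h P : MvPolynomial σ F} (hh : Prime h)
    (hP : ∀ y : σ → K, aeval y h = 0 → aeval y P = 0) : h ∣ P := by
  have : (Ideal.span {h}).IsPrime := (Ideal.span_singleton_prime hh.ne_zero).mpr hh
  rw [← Ideal.mem_span_singleton, ← IsPrime.vanishingIdeal_zeroLocus (K := K) (Ideal.span {h})]
  exact fun y hy => hP y (hy h (Ideal.mem_span_singleton_self h))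

theorem not_dvd_gramDet {h : MvPolynomial (Fin 6) F}
    (hh : aeval (![0, 0, 0, 0, 0, 1] : Fin 6 → F) h = 0) : ¬ h ∣ gramDet X := by
  intro hdvd
  have h1 := hh ▸ map_dvd (aeval (![0, 0, 0, 0, 0, 1] : Fin 6 → F)) hdvd
  rw [aeval_gramDet, zero_dvd_iff] at h1
  simp [gramDet, det_fin_three] at h1

theorem prime_X_mul_X_sub_X_sq : Prime (X 3 * X 5 - X 4 ^ 2 : MvPolynomial (Fin 6) F) := by
  have hX : Prime (X 3 : MvPolynomial (Fin 6) F) := X_prime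
  have hrel : IsRelPrime (X 3 : MvPolynomial (Fin 6) F) (-X 4 ^ 2) := by
    rw [hX.irreducible.isRelPrime_iff_not_dvd, dvd_neg]
    exact fun hdvd => absurd (X_dvd_X.mp (hX.dvd_of_dvd_pow hdvd)) (by decide)
  rw [sub_eq_add_neg]
  refine (irreducible_mul_X_add _ _ 5 hX.ne_zero (by simp) ?_ hrel).prime
  rw [vars_neg, X_pow_eq_monomial, vars_monomial one_ne_zero]
  simp

variable [NeZero (2 : F)]

theorem dvd_of_evenSubst_mul_eq {h P : MvPolynomial (Fin 6) F} (hh : Prime h)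
    (hdiscr : ¬ h ∣ charDiscr X) {f : Rpoly F 1} (hf : evenSubst F h * f = evenSubst F P) :
    h ∣ P := by
  refine (hh.dvd_or_dvd (dvd_of_forall_aeval_eq_zero (K := AlgebraicClosure F) hh
    fun y hy => ?_)).resolve_left hdiscr
  have := neZero_two_of_algebra F (AlgebraicClosure F)
  rw [_root_.map_mul, aeval_charDiscr, mul_eq_zero, or_iff_not_imp_left]
  intro hy'
  obtain ⟨M, hM⟩ := exists_invariants_castSucc_eq hy'
  have hsubst (Q : MvPolynomial (Fin 6) F) : evalAt M (evenSubst F Q) = aeval y Q := by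
    rw [evalAt_evenSubst, funext hM]
  rw [← hsubst, ← hf, _root_.map_mul, hsubst, hy, zero_mul]

theorem mem_normalForms_of_evenSubst_mul_mem {h : MvPolynomial (Fin 6) F} (hh : Prime h)
    (h₀ : evenSubst F h ≠ 0) (hdiscr : ¬ h ∣ charDiscr X) (hgram : ¬ h ∣ gramDet X)
    {f : Rpoly F 1} (hf : evenSubst F h * f ∈ normalForms F) : f ∈ normalForms F := by
  obtain ⟨P, Q, hPQ⟩ := hf
  have hτ := congrArg (transposeHom F) hPQ
  simp only [map_add, _root_.map_mul, transposeHom_evenSubst,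
    transposeHom_basicInvariant_last] at hτ
  have h2 : ¬ h ∣ 2 := fun h2 => hh.not_isUnit <| isUnit_of_dvd_unit h2 <| by
    rw [← map_ofNat C 2]
    exact (isUnit_iff_ne_zero.mpr two_ne_zero).map C
  have hP : h ∣ 2 * P := by
    refine dvd_of_evenSubst_mul_eq hh hdiscr (f := f + transposeHom F f) ?_
    rw [_root_.map_mul, map_ofNat]
    linear_combination hPQ + hτ
  have hQ : h ∣ 2 * (gramDet X * Q) := by
    refine dvd_of_evenSubst_mul_eq hh hdiscr
      (f := (f - transposeHom F f) * basicInvariant F 6) ?_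
    rw [_root_.map_mul, map_ofNat, _root_.map_mul, ← basicInvariant_last_sq]
    linear_combination basicInvariant F 6 * (hPQ - hτ)
  obtain ⟨P', rfl⟩ := (hh.dvd_or_dvd hP).resolve_left h2
  obtain ⟨Q', rfl⟩ := (hh.dvd_or_dvd ((hh.dvd_or_dvd hQ).resolve_left h2)).resolve_left hgram
  refine ⟨P', Q', mul_left_cancel₀ h₀ ?_⟩
  rw [hPQ, _root_.map_mul, _root_.map_mul]
  ring

theorem not_dvd_charDiscr {h : MvPolynomial (Fin 6) F}
    (hh : aeval (![0, 1, 0, 0, 0, 0] : Fin 6 → F) h = 0) : ¬ h ∣ charDiscr X := by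
  intro hdvd
  have h4 := hh ▸ map_dvd (aeval (![0, 1, 0, 0, 0, 0] : Fin 6 → F)) hdvd
  rw [aeval_charDiscr, zero_dvd_iff] at h4
  -- The discriminant of `t³ + t` is `-4`.
  refine pow_ne_zero 2 (two_ne_zero (α := F)) ?_
  simp only [charDiscr, Cubic.discr, cons_val] at h4
  linear_combination -h4

theorem mem_normalForms_of_evenSubst_minorProduct_mul_mem {f : Rpoly F 1}
    (hf : evenSubst F (minorProduct X) * f ∈ normalForms F) : f ∈ normalForms F := by
  have hne := evenSubst_minorProduct_ne_zero (F := F)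
  rw [minorProduct, _root_.map_mul] at hne hf
  rw [mul_assoc] at hf
  have hf' := mem_normalForms_of_evenSubst_mul_mem X_prime (left_ne_zero_of_mul hne)
    (not_dvd_charDiscr (by simp)) (not_dvd_gramDet (by simp)) hf
  exact mem_normalForms_of_evenSubst_mul_mem prime_X_mul_X_sub_X_sq (right_ne_zero_of_mul hne)
    (not_dvd_charDiscr (by simp)) (not_dvd_gramDet (by simp)) hf'

theorem invAlg_le_normalForms [Infinite F] : invAlg F 1 ≤ normalForms F := by
  intro f hf
  obtain ⟨n, Q, hQ⟩ := exists_evenSubst_pow_mul_eq hf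
  have hmem : evenSubst F (minorProduct X) ^ n * f ∈ normalForms F :=
    hQ ▸ aeval_basicInvariant_mem_normalForms Q
  clear hQ
  induction n with
  | zero => rwa [pow_zero, one_mul] at hmem
  | succ n ih =>
    rw [pow_succ', mul_assoc] at hmem
    exact ih (mem_normalForms_of_evenSubst_minorProduct_mul_mem hmem)

end NormalForms

section Indecomposability

variable {F : Type} [Field F]

theorem constantCoeff_eq_zero_of_isHomogeneous {σ R : Type*} [CommSemiring R]
    {f : MvPolynomial σ R} {n : ℕ} (hn : 0 < n) (hf : f.IsHomogeneous n) :
    constantCoeff f = 0 := by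
  rw [constantCoeff_eq]
  exact hf.coeff_eq_zero (by simpa using hn.ne)

theorem constantCoeff_eq_zero_of_mem_plusIdeal {d : ℕ} {x : invAlg F d} (hx : x ∈ plusIdeal F d) :
    constantCoeff (x : Rpoly F d) = 0 := by
  let ε : invAlg F d →+* F :=
    (constantCoeff (σ := Fin 3 × Fin 3 × Fin d)).comp (invAlg F d).val.toRingHom
  have hle : plusIdeal F d ≤ RingHom.ker ε := Ideal.span_le.mpr
    fun f ⟨n, hn, hf⟩ => constantCoeff_eq_zero_of_isHomogeneous hn hf
  exact hle hx

theorem basicInvariant_last_ne_zero [NeZero (2 : F)] : basicInvariant F 6 ≠ 0 := by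
  intro h
  have := neZero_two_of_algebra F (MvPolynomial (Fin 6) F)
  have h64 : (64 : MvPolynomial (Fin 6) F) ≠ 0 := by
    rw [show (64 : MvPolynomial (Fin 6) F) = 2 ^ 6 by norm_num]
    exact pow_ne_zero 6 two_ne_zero
  have hz := evalAt_basicInvariant (F := F) (sliceMatrix (X : Fin 6 → MvPolynomial (Fin 6) F)) 6
  rw [h, _root_.map_zero, invariants_sliceMatrix] at hz
  have hX (i : Fin 6) : (X i : MvPolynomial (Fin 6) F) ≠ 0 := X_ne_zero i
  exact neg_ne_zero.mpr (mul_ne_zero h64 (mul_ne_zero (mul_ne_zero (pow_ne_zero 2 (hX 5))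
    (pow_ne_zero 2 (hX 3))) (mul_ne_zero (hX 4) (hX 5)))) hz.symm

theorem exists_normalForm_of_mem_plusIdeal [Infinite F] [NeZero (2 : F)] {x : invAlg F 1}
    (hx : x ∈ plusIdeal F 1) :
    ∃ P Q, (x : Rpoly F 1) = evenSubst F P + basicInvariant F 6 * evenSubst F Q ∧
      constantCoeff (evenSubst F P) = 0 := by
  obtain ⟨P, Q, hPQ⟩ := invAlg_le_normalForms x.2
  have hlast : constantCoeff (basicInvariant F 6) = 0 :=
    constantCoeff_eq_zero_of_isHomogeneous (n := 6) (by norm_num) (isHomogeneous_basicInvariant 6)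
  refine ⟨P, Q, hPQ, ?_⟩
  simpa only [hPQ, map_add, _root_.map_mul, hlast, zero_mul, add_zero] using
    constantCoeff_eq_zero_of_mem_plusIdeal hx

theorem exists_sub_transposeHom_eq_mul [Infinite F] [NeZero (2 : F)] {x : invAlg F 1}
    (hx : x ∈ plusIdeal F 1 ^ 2) :
    ∃ r : Rpoly F 1, constantCoeff r = 0 ∧
      (x : Rpoly F 1) - transposeHom F x = basicInvariant F 6 * r := by
  rw [pow_two] at hx
  refine Submodule.mul_induction_on hx ?_ ?_
  · intro a ha b hb
    obtain ⟨P, Q, ha', hP⟩ := exists_normalForm_of_mem_plusIdeal ha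
    obtain ⟨P', Q', hb', hP'⟩ := exists_normalForm_of_mem_plusIdeal hb
    refine ⟨2 * (evenSubst F P * evenSubst F Q' + evenSubst F P' * evenSubst F Q), ?_, ?_⟩
    · simp only [_root_.map_mul, map_add, hP, hP', zero_mul, add_zero, mul_zero]
    · rw [MulMemClass.coe_mul, ha', hb']
      simp only [_root_.map_mul, map_add, transposeHom_evenSubst, transposeHom_basicInvariant_last]
      ring
  · rintro a b ⟨r, hr, ha⟩ ⟨s, hs, hb⟩
    refine ⟨r + s, by rw [map_add, hr, hs, add_zero], ?_⟩
    rw [AddMemClass.coe_add, map_add]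
    linear_combination ha + hb

theorem basicInvariant_last_notMem_decompSet [Infinite F] [NeZero (2 : F)] :
    basicInvariant F 6 ∉ decompSet F 1 := by
  rintro ⟨x, hx, hx'⟩
  obtain ⟨r, hr, h⟩ := exists_sub_transposeHom_eq_mul hx
  rw [hx', transposeHom_basicInvariant_last, sub_neg_eq_add, ← mul_two] at h
  rw [← mul_left_cancel₀ basicInvariant_last_ne_zero h, map_ofNat] at hr
  exact two_ne_zero hr

end Indecomposability

section DegreeBound

variable {F : Type} [Field F]

theorem exists_aeval_basicInvariant_eq [Infinite F] [NeZero (2 : F)] {f : Rpoly F 1}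
    (hf : f ∈ invAlg F 1) : ∃ Q : MvPolynomial (Fin 7) F, aeval (basicInvariant F) Q = f := by
  obtain ⟨P, Q, rfl⟩ := invAlg_le_normalForms hf
  have h (P : MvPolynomial (Fin 6) F) :
      aeval (basicInvariant F) (rename Fin.castSucc P) = evenSubst F P := aeval_rename _ _ _
  exact ⟨rename Fin.castSucc P + X 6 * rename Fin.castSucc Q, by
    rw [map_add, _root_.map_mul, aeval_X, h, h]⟩

theorem isHomogeneous_aeval_monomial {σ τ R : Type*} [CommSemiring R]
    {b : σ → MvPolynomial τ R} {w : σ → ℕ} (hb : ∀ i, (b i).IsHomogeneous (w i)) (m : σ →₀ ℕ)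
    (a : R) : (aeval b (monomial m a)).IsHomogeneous (Finsupp.weight w m) := by
  have hprod : (∏ i ∈ m.support, b i ^ m i).IsHomogeneous (∑ i ∈ m.support, w i * m i) :=
    IsHomogeneous.prod _ _ _ fun i _ => (hb i).pow (m i)
  rw [aeval_monomial, Finsupp.prod, Finsupp.weight_apply, Finsupp.sum]
  simpa only [algebraMap_eq, smul_eq_mul, mul_comm, zero_add] using (isHomogeneous_C τ a).mul hprod

theorem add_mem_decompSet {d : ℕ} {f g : Rpoly F d} (hf : f ∈ decompSet F d)
    (hg : g ∈ decompSet F d) : f + g ∈ decompSet F d := by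
  obtain ⟨x, hx, rfl⟩ := hf
  obtain ⟨y, hy, rfl⟩ := hg
  exact ⟨x + y, Ideal.add_mem _ hx hy, rfl⟩

theorem mul_mem_decompSet {d m n : ℕ} {f g : Rpoly F d} (hf : f ∈ invAlg F d)
    (hg : g ∈ invAlg F d) (hfm : f.IsHomogeneous m) (hgn : g.IsHomogeneous n) (hm : 0 < m)
    (hn : 0 < n) : f * g ∈ decompSet F d := by
  refine ⟨⟨f, hf⟩ * ⟨g, hg⟩, ?_, rfl⟩
  rw [pow_two]
  exact Ideal.mul_mem_mul (Ideal.subset_span ⟨m, hm, hfm⟩) (Ideal.subset_span ⟨n, hn, hgn⟩)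

theorem aeval_monomial_mem_decompSet {m : Fin 7 →₀ ℕ} (hm : 6 < Finsupp.weight invDegree m)
    (a : F) : aeval (basicInvariant F) (monomial m a) ∈ decompSet F 1 := by
  obtain ⟨i, hi⟩ : ∃ i, m i ≠ 0 := by
    by_contra! h
    rw [Finsupp.ext (g := 0) h, _root_.map_zero] at hm
    exact absurd hm (by norm_num)
  have hdeg : ∀ i, 0 < invDegree i ∧ invDegree i ≤ 6 := by decide
  obtain ⟨m, rfl⟩ : ∃ m', m = m' + Finsupp.single i 1 :=
    ⟨m - Finsupp.single i 1, (tsub_add_cancel_of_le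
      (Finsupp.single_le_iff.mpr (Nat.one_le_iff_ne_zero.mpr hi))).symm⟩
  rw [map_add, Finsupp.weight_single, one_smul] at hm
  rw [monomial_add_single, pow_one, _root_.map_mul, aeval_X]
  exact mul_mem_decompSet (aeval_basicInvariant_mem_invAlg _) (basicInvariant_mem_invAlg i)
    (isHomogeneous_aeval_monomial isHomogeneous_basicInvariant m a)
    (isHomogeneous_basicInvariant i) (by have := hdeg i; omega) (hdeg i).1

theorem homogeneousComponent_aeval_mem_decompSet {n : ℕ} (hn : 6 < n)
    (Q : MvPolynomial (Fin 7) F) :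
    homogeneousComponent n (aeval (basicInvariant F) Q) ∈ decompSet F 1 := by
  induction Q using MvPolynomial.induction_on' with
  | monomial m a =>
    rw [homogeneousComponent_of_mem
      (isHomogeneous_aeval_monomial isHomogeneous_basicInvariant m a)]
    split_ifs with h
    · exact aeval_monomial_mem_decompSet (h ▸ hn) a
    · exact ⟨0, Ideal.zero_mem _, rfl⟩
  | add p q hp hq =>
    rw [map_add, map_add]
    exact add_mem_decompSet hp hq

theorem mem_decompSet_of_six_lt [Infinite F] [NeZero (2 : F)] {f : Rpoly F 1} {n : ℕ}
    (hf : f ∈ invAlg F 1) (hfn : f.IsHomogeneous n) (hn : 6 < n) : f ∈ decompSet F 1 := by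
  obtain ⟨Q, rfl⟩ := exists_aeval_basicInvariant_eq hf
  have h := homogeneousComponent_aeval_mem_decompSet hn Q
  rwa [homogeneousComponent_of_mem hfn, if_pos rfl] at h

end DegreeBound

/-- if `char F ≠ 2` and `d = 1`, then `D_max = 6`: `6` is the greatest degree of
an indecomposable homogeneous `O(3)`-invariant of a single generic `3×3` matrix. -/
theorem stmt19 (F : Type) [Field F] [Infinite F] (h2 : ringChar F ≠ 2) :
    IsGreatest {n : ℕ | ∃ f : Rpoly F 1, f ∈ invAlg F 1 ∧
      MvPolynomial.IsHomogeneous f n ∧ f ∉ decompSet F 1} 6 := by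
  have : NeZero (2 : F) := ⟨Ring.two_ne_zero h2⟩
  constructor
  · exact ⟨basicInvariant F 6, basicInvariant_mem_invAlg 6, isHomogeneous_basicInvariant 6,
      basicInvariant_last_notMem_decompSet⟩
  · rintro n ⟨f, hf, hfn, hdecomp⟩
    exact not_lt.mp fun hn => hdecomp (mem_decompSet_of_six_lt hf hfn hn)
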